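/- arXiv:2010.10583 — 7 statements merged into one kernel-verified Lean document; each statement's English description precedes it below -/
import Mathlib

section
/- Let n be a positive integer and let k be an integer with 0 ≤ k and p := k/n < 1/2. Then α·β·C(n,k) ≤ Σ_{i=0}^{k} C(n,i) ≤ α·C(n,k), where α = (1 − p + 1/n)/(1 − 2p + 1/n) and β = (1 − 2p)² / ((1 − 2p)² + 1/n). -/
theorem aux_alg (m k : ℝ) (hm : 0 ≤ m) (hk : 0 ≤ k) :
    (m + k + 1)^2 * m^2 * ((m + 3) * ((m+2)^2 + (m + 2 * k))) ≤
    ((m + k + 1) * ((m + 3) * ((m+2)^2 + (m + 2 * k)))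
      + k * (m + k + 2) * (m+2)^2) * ((m + 1) * (m^2 + (m + 2 * k))) := by
  rw [← sub_nonneg]
  ring_nf
  positivity

theorem aux_step (n k : ℕ) (h : 2 * (k + 1) < n) (S C C' : ℝ) (hC : 0 < C) (hC' : 0 < C')
    (hr : C' * (k + 1) = C * (n - k))
    (h1 : ((n:ℝ) - k + 1) / (n - 2 * k + 1) * ((n - 2 * k)^2 / ((n - 2 * k)^2 + n)) * C ≤ S)
    (h2 : S ≤ ((n:ℝ) - k + 1) / (n - 2 * k + 1) * C) :
    ((n:ℝ) - (k + 1) + 1) / (n - 2 * (k + 1) + 1) * ((n - 2 * (k + 1))^2 / ((n - 2 * (k + 1))^2 + n)) * C'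
      ≤ S + C' ∧
    S + C' ≤ ((n:ℝ) - (k + 1) + 1) / (n - 2 * (k + 1) + 1) * C' := by
  obtain ⟨m, rfl⟩ : ∃ m, n = (m + 1) + 2 * (k + 1) := ⟨n - 2 * (k + 1) - 1, by omega⟩
  push_cast at *
  have hk : (0:ℝ) < (k:ℝ) + 1 := by positivity
  have hm : (0:ℝ) < (m:ℝ) + 1 := by positivity
  generalize (k:ℝ) = k' at *
  generalize (m:ℝ) = m' at *
  obtain ⟨K, rfl⟩ : ∃ K, k' = K - 1 := ⟨k' + 1, by ring⟩
  obtain ⟨M, rfl⟩ : ∃ M, m' = M - 1 := ⟨m' + 1, by ring⟩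
  ring_nf at hk hm
  have e1 : (M - 1 + 1 + 2 * (K - 1 + 1) - (K - 1) + 1 : ℝ) = M + K + 2 := by ring
  have e2 : (M - 1 + 1 + 2 * (K - 1 + 1) - 2 * (K - 1) + 1 : ℝ) = M + 3 := by ring
  have e3 : (M - 1 + 1 + 2 * (K - 1 + 1) - 2 * (K - 1) : ℝ) = M + 2 := by ring
  have e4 : (M - 1 + 1 + 2 * (K - 1 + 1) : ℝ) = M + 2 * K := by ring
  have e5 : (M + 2 * K - (K - 1 + 1) + 1 : ℝ) = M + K + 1 := by ring
  have e6 : (M + 2 * K - 2 * (K - 1 + 1) + 1 : ℝ) = M + 1 := by ring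
  have e7 : (M + 2 * K - 2 * (K - 1 + 1) : ℝ) = M := by ring
  rw [e1, e2] at h1 h2
  rw [e3, e4] at h1
  rw [e4, e5, e6, e7]
  have hCe : C = C' * K / (M + K + 1) := by
    field_simp
    linarith
  subst hCe
  have key := aux_alg M K hm.le hk.le
  constructor
  · refine le_trans ?_ (add_le_add_left h1 C')
    have : (M + K + 1) / (M + 1) * (M ^ 2 / (M ^ 2 + (M + 2 * K))) * C' =
       C' / (M+K+1) * (((M + K + 1)^2 * M^2) / ((M + 1) * (M^2 + (M + 2 * K)))) := by
      field_simp
    rw [this]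
    have : (M + K + 2) / (M + 3) * ((M + 2) ^ 2 / ((M + 2) ^ 2 + (M + 2 * K))) * (C' * K / (M + K + 1)) + C' =
       C' / (M+K+1) * (((M + K + 1) * ((M + 3) * ((M+2)^2 + (M + 2 * K)))
      + K * (M + K + 2) * (M+2)^2) / ((M + 3) * ((M+2)^2 + (M + 2 * K)))) := by
      field_simp
      ring
    rw [this]
    apply mul_le_mul_of_nonneg_left _ (by positivity)
    rw [div_le_div_iff₀ (by positivity) (by positivity)]
    exact key
  · refine le_trans (add_le_add_left h2 C') ?_
    rw [← sub_nonneg]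
    have : (M + K + 1) / (M + 1) * C' - ((M + K + 2) / (M + 3) * (C' * K / (M + K + 1)) + C')
      = C' * K * (M + 1 + 2 * K) / ((M + 1) * (M + 3) * (M + K + 1)) := by
      field_simp
      ring
    rw [this]
    positivity

theorem aux_main (n k : ℕ) (h : 2 * k < n) :
    ((n:ℝ) - k + 1) / (n - 2 * k + 1) * ((n - 2 * k)^2 / ((n - 2 * k)^2 + n)) * (n.choose k : ℝ)
      ≤ ∑ i ∈ Finset.range (k + 1), (n.choose i : ℝ) ∧
    ∑ i ∈ Finset.range (k + 1), (n.choose i : ℝ) ≤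
      ((n:ℝ) - k + 1) / (n - 2 * k + 1) * (n.choose k : ℝ) := by
  induction k with
  | zero =>
    have h1 : ((n:ℝ) + 1) / (n + 1) = 1 := div_self (by positivity)
    have h2 : (n:ℝ)^2 / (n^2 + n) ≤ 1 := div_le_one_of_le₀ (by simp) (by positivity)
    simp [h1, h2]
  | succ k ih =>
    obtain ⟨h1, h2⟩ := ih (by omega)
    rw [Finset.sum_range_succ]
    have hr := Nat.choose_succ_right_eq n k
    have hr' : (n.choose (k+1) : ℝ) * (k + 1) = n.choose k * (n - k) := by
      rw [← Nat.cast_sub (by omega)]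
      exact_mod_cast hr
    have := aux_step n k h _ _ _ (by exact_mod_cast Nat.choose_pos (by omega))
      (by exact_mod_cast Nat.choose_pos (by omega)) hr' h1 h2
    push_cast
    exact this

/-- For a positive integer `n` and integer `k ≥ 0` with `p = k/n < 1/2`,
`α·β·C(n,k) ≤ ∑_{i=0}^{k} C(n,i) ≤ α·C(n,k)`, where
`α = (1 − p + 1/n)/(1 − 2p + 1/n)` and `β = (1 − 2p)²/((1 − 2p)² + 1/n)`. -/
theorem binomial_partial_sum_bounds (n k : ℕ) (hn : 0 < n) (p α β : ℝ)
    (hp : p = (k : ℝ) / n) (hhalf : p < 1 / 2)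
    (hα : α = (1 - p + 1 / n) / (1 - 2 * p + 1 / n))
    (hβ : β = (1 - 2 * p) ^ 2 / ((1 - 2 * p) ^ 2 + 1 / n)) :
    α * β * (n.choose k : ℝ) ≤ ∑ i ∈ Finset.range (k + 1), (n.choose i : ℝ)
    ∧ ∑ i ∈ Finset.range (k + 1), (n.choose i : ℝ) ≤ α * (n.choose k : ℝ) := by
  have hn' : (0:ℝ) < n := by exact_mod_cast hn
  have hk : 2 * k < n := by
    rw [hp, div_lt_iff₀ hn'] at hhalf
    have : (2 * k : ℝ) < n := by linarith
    exact_mod_cast this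
  have hk' : (0:ℝ) < n - 2 * k := by
    have : (2 * k : ℝ) < n := by exact_mod_cast hk
    linarith
  have ea : α = ((n:ℝ) - k + 1) / (n - 2 * k + 1) := by
    rw [hα, hp, ← mul_div_mul_left _ _ hn'.ne']
    congr 1 <;> field_simp
  have eb : β = ((n - 2 * k)^2 / ((n - 2 * k)^2 + n) : ℝ) := by
    rw [hβ, hp, ← mul_div_mul_left _ _ (pow_pos hn' 2).ne']
    congr 1 <;> field_simp
  rw [ea, eb]
  exact aux_main n k hk
end

section
/- Let A be a finite alphabet and n a positive integer, and let P = [p_1, …, p_{|A|}] be a probability mass function such that n·p_i is a positive integer for every i (so 0 < p_i < 1). Then 2^{n·H(P)} / √( (8n)^{|A|−1} · Π_{i=1}^{|A|} p_i ) ≤ n! / Π_{i=1}^{|A|} (n·p_i)! ≤ 2^{n·H(P)} / √( (2πn)^{|A|−1} · Π_{i=1}^{|A|} p_i ). -/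
/-- Entropy (base 2) of a pmf on a finite alphabet. -/
noncomputable def entropy {A : Type*} [Fintype A] (P : A → ℝ) : ℝ :=
  -∑ a, P a * Real.logb 2 (P a)

open Stirling in
lemma aux_d (m j : ℕ) : Real.log (stirlingSeq (m + j + 1)) - Real.log (stirlingSeq (m + j + 2))
    ≤ Real.log (stirlingSeq (m + 1)) - Real.log (stirlingSeq (m + 2)) := by
  refine hasSum_le ?_ (log_stirlingSeq_sdiff_hasSum (m + j)) (log_stirlingSeq_sdiff_hasSum m)
  intro k
  push_cast
  gcongr
  linarith [(Nat.cast_nonneg j : (0 : ℝ) ≤ j)]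

open Stirling in
lemma aux_two : stirlingSeq 1 * stirlingSeq 1 = 2 * stirlingSeq 2 := by
  have h4 : √(2 * 2 : ℝ) = 2 := Real.sqrt_mul_self (by norm_num)
  have h2 : √(2 : ℝ) * √2 = 2 := Real.mul_self_sqrt (by norm_num)
  have h2' : √(2 : ℝ) ^ 2 = 2 := Real.sq_sqrt (by norm_num)
  have e : stirlingSeq 2 = 2 / (√(2 * 2 : ℝ) * (2 / Real.exp 1) ^ 2) := by
    simp [stirlingSeq]
  rw [stirlingSeq_one, e, h4]
  field_simp
  rw [h2']

open Stirling in
lemma aux_log (a b : ℕ) : Real.log (stirlingSeq (a + 1)) + Real.log (stirlingSeq (b + 1))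
    ≤ Real.log 2 + Real.log (stirlingSeq (a + b + 2)) := by
  induction a with
  | zero =>
    induction b with
    | zero =>
      have h1 := stirlingSeq'_pos 0
      have h2 := stirlingSeq'_pos 1
      simp only [zero_add] at *
      rw [← Real.log_mul h1.ne' h1.ne', ← Real.log_mul two_ne_zero h2.ne', aux_two]
    | succ b ih =>
      have := aux_d b 1
      simp only [zero_add, add_assoc, Nat.reduceAdd] at *
      rw [show b + (1 + 2) = b + 3 from rfl] at *
      linarith
  | succ a ih =>
    have := aux_d a (b + 1)
    rw [show a + (b + 1) + 1 = a + b + 2 by ring, show a + (b + 1) + 2 = a + b + 3 by ring] at this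
    rw [show a + 1 + 1 = a + 2 from rfl, show a + 1 + b + 2 = a + b + 3 by ring]
    linarith

open Stirling in
lemma aux_pos {a : ℕ} (ha : 0 < a) : 0 < stirlingSeq a := by
  obtain ⟨k, rfl⟩ := Nat.exists_eq_succ_of_ne_zero ha.ne'
  exact stirlingSeq'_pos k

open Stirling in
lemma aux_mul {a b : ℕ} (ha : 0 < a) (hb : 0 < b) :
    stirlingSeq a * stirlingSeq b ≤ 2 * stirlingSeq (a + b) := by
  have h1 := aux_pos ha
  have h2 := aux_pos hb
  have h3 := aux_pos (Nat.add_pos_left ha b)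
  rw [← Real.log_le_log_iff (by positivity) (by positivity), Real.log_mul h1.ne' h2.ne',
    Real.log_mul two_ne_zero h3.ne']
  obtain ⟨k, rfl⟩ := Nat.exists_eq_succ_of_ne_zero ha.ne'
  obtain ⟨l, rfl⟩ := Nat.exists_eq_succ_of_ne_zero hb.ne'
  have := aux_log k l
  rwa [show k + l + 2 = k.succ + l.succ by simp only [Nat.succ_eq_add_one]; ring] at this

open Stirling in
lemma aux_lower {A : Type*} (c : A → ℕ) (hc : ∀ i, 0 < c i) (S : Finset A) (hS : S.Nonempty) :
    ∏ i ∈ S, stirlingSeq (c i) ≤ 2 ^ (S.card - 1) * stirlingSeq (∑ i ∈ S, c i) := by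
  induction hS using Finset.Nonempty.cons_induction with
  | singleton a => simp
  | cons a s h hs ih =>
    rw [Finset.prod_cons, Finset.sum_cons, Finset.card_cons, Nat.add_sub_cancel]
    have hp := Finset.sum_pos (fun i _ => hc i) hs
    calc _ ≤ stirlingSeq (c a) * (2 ^ (s.card - 1) * stirlingSeq (∑ i ∈ s, c i)) :=
          mul_le_mul_of_nonneg_left ih (aux_pos (hc a)).le
      _ = 2 ^ (s.card - 1) * (stirlingSeq (c a) * stirlingSeq (∑ i ∈ s, c i)) := by ring
      _ ≤ 2 ^ (s.card - 1) * (2 * stirlingSeq (c a + ∑ i ∈ s, c i)) := by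
          exact mul_le_mul_of_nonneg_left (aux_mul (hc a) hp) (by positivity)
      _ = 2 ^ (s.card - 1 + 1) * stirlingSeq (c a + ∑ i ∈ s, c i) := by ring
      _ = _ := by rw [Nat.sub_add_cancel hs.card_pos]

open Stirling in
lemma aux_anti {a b : ℕ} (ha : 0 < a) (h : a ≤ b) : stirlingSeq b ≤ stirlingSeq a := by
  obtain ⟨k, rfl⟩ := Nat.exists_eq_succ_of_ne_zero ha.ne'
  obtain ⟨l, rfl⟩ := Nat.exists_eq_succ_of_ne_zero (by omega : b ≠ 0)
  exact stirlingSeq'_antitone (Nat.succ_le_succ_iff.mp h)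

open Stirling in
lemma aux_upper {A : Type*} (c : A → ℕ) (hc : ∀ i, 0 < c i) (S : Finset A) (hS : S.Nonempty) :
    √Real.pi ^ (S.card - 1) * stirlingSeq (∑ i ∈ S, c i) ≤ ∏ i ∈ S, stirlingSeq (c i) := by
  induction hS using Finset.Nonempty.cons_induction with
  | singleton a => simp
  | cons a s h hs ih =>
    rw [Finset.prod_cons, Finset.sum_cons, Finset.card_cons, Nat.add_sub_cancel]
    have hp := Finset.sum_pos (fun i _ => hc i) hs
    calc _ = √Real.pi ^ (s.card - 1 + 1) * stirlingSeq (c a + ∑ i ∈ s, c i) := by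
          rw [Nat.sub_add_cancel hs.card_pos]
      _ = √Real.pi * (√Real.pi ^ (s.card - 1) * stirlingSeq (c a + ∑ i ∈ s, c i)) := by ring
      _ ≤ √Real.pi * (√Real.pi ^ (s.card - 1) * stirlingSeq (∑ i ∈ s, c i)) := by
          gcongr; exact aux_anti hp (by omega)
      _ ≤ stirlingSeq (c a) * (√Real.pi ^ (s.card - 1) * stirlingSeq (∑ i ∈ s, c i)) := by
          have := (aux_pos hp).le
          gcongr; exact sqrt_pi_le_stirlingSeq (hc a).ne'
      _ ≤ _ := mul_le_mul_of_nonneg_left ih (aux_pos (hc a)).le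

open Stirling in
lemma aux_fact {n : ℕ} (hn : 0 < n) :
    (n.factorial : ℝ) = stirlingSeq n * √(2 * n) * ((n : ℝ) ^ n / Real.exp 1 ^ n) := by
  have : (0 : ℝ) < n := by exact_mod_cast hn
  rw [stirlingSeq, ← div_pow]
  field_simp

lemma aux_ent {A : Type*} [Fintype A] (n : ℕ) (hn : 0 < n)
    (P : A → ℝ) (c : A → ℕ)
    (hc : ∀ i, 0 < c i) (hcsum : ∑ i, c i = n)
    (hP : ∀ i, P i = (c i : ℝ) / n) :
    (2 : ℝ) ^ ((n : ℝ) * entropy P) = (n : ℝ) ^ n / ∏ i, (c i : ℝ) ^ (c i) := by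
  have hn' : (0 : ℝ) < n := by exact_mod_cast hn
  have h1 : (n : ℝ) * entropy P = - ∑ i, Real.logb 2 (P i) * (c i : ℝ) := by
    rw [entropy, mul_neg, Finset.mul_sum]
    congr 1
    refine Finset.sum_congr rfl fun i _ => ?_
    rw [hP]; field_simp
  rw [h1, Real.rpow_neg two_pos.le, Real.rpow_sum_of_pos two_pos]
  have h2 : ∀ i, (2 : ℝ) ^ (Real.logb 2 (P i) * (c i : ℝ)) = (c i : ℝ) ^ (c i) / (n : ℝ) ^ (c i) := by
    intro i
    have : (0 : ℝ) < c i := by exact_mod_cast hc i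
    rw [Real.rpow_mul two_pos.le, Real.rpow_logb two_pos (by norm_num) (by rw [hP]; positivity),
      Real.rpow_natCast, hP, div_pow]
  rw [Finset.prod_congr rfl fun i _ => h2 i, Finset.prod_div_distrib, Finset.prod_pow_eq_pow_sum,
    hcsum, inv_div]

open Stirling in
lemma aux_main_s3 {A : Type*} [Fintype A] (n : ℕ) (hn : 0 < n)
    (P : A → ℝ) (c : A → ℕ)
    (hc : ∀ i, 0 < c i) (hcsum : ∑ i, c i = n)
    (hP : ∀ i, P i = (c i : ℝ) / n) (hA : 0 < Fintype.card A) :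
    (n.factorial : ℝ) / ∏ i, ((c i).factorial : ℝ) =
      stirlingSeq n / (∏ i, stirlingSeq (c i)) * ((2 : ℝ) ^ ((n : ℝ) * entropy P) /
        √((2 * (n : ℝ)) ^ (Fintype.card A - 1) * ∏ i, P i)) := by
  have hn' : (0 : ℝ) < n := by exact_mod_cast hn
  have hc' : ∀ i, (0 : ℝ) < c i := fun i => by exact_mod_cast hc i
  rw [aux_ent n hn P c hc hcsum hP, aux_fact hn,
    Finset.prod_congr rfl fun i _ => aux_fact (hc i)]
  simp only [Finset.prod_mul_distrib, Finset.prod_div_distrib]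
  rw [Finset.prod_pow_eq_pow_sum, hcsum]
  have hs : ∏ i, √(2 * (c i : ℝ)) =
      √(2 * n) * √((2 * (n : ℝ)) ^ (Fintype.card A - 1) * ∏ i, P i) := by
    rw [← Real.sqrt_mul (by positivity), ← mul_assoc, ← pow_succ', Nat.sub_add_cancel hA,
      ← Real.sqrt_prod _ (fun i _ => by have := hc' i; positivity)]
    congr 1
    rw [← Finset.card_univ, ← Finset.prod_const, ← Finset.prod_mul_distrib]
    refine Finset.prod_congr rfl fun i _ => ?_
    rw [hP]; field_simp
  rw [hs]
  have hPp : 0 < ∏ i, P i := Finset.prod_pos fun i _ => by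
    rw [hP]; exact div_pos (hc' i) hn'
  have h1 : 0 < √((2 * (n : ℝ)) ^ (Fintype.card A - 1) * ∏ i, P i) :=
    Real.sqrt_pos.mpr (by positivity)
  have h2 : 0 < √(2 * (n : ℝ)) := Real.sqrt_pos.mpr (by positivity)
  have h3 : 0 < ∏ i, stirlingSeq (c i) := Finset.prod_pos fun i _ => aux_pos (hc i)
  have h4 : 0 < ∏ i, (c i : ℝ) ^ (c i) := Finset.prod_pos fun i _ => pow_pos (hc' i) _
  have h5 := Real.exp_pos 1
  generalize √((2 * (n : ℝ)) ^ (Fintype.card A - 1) * ∏ i, P i) = X at *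
  generalize √(2 * (n : ℝ)) = Y at *
  field_simp

lemma aux_sqrt (L x Q : ℝ) (k : ℕ) (hL : 0 ≤ L) :
    √((2 * L * x) ^ k * Q) = √L ^ k * √((2 * x) ^ k * Q) := by
  rw [show (2 * L * x) ^ k * Q = L ^ k * ((2 * x) ^ k * Q) by simp only [mul_pow]; ring,
    Real.sqrt_mul (by positivity)]
  congr 1
  rw [Real.sqrt_eq_iff_mul_self_eq (by positivity) (by positivity), ← mul_pow,
    Real.mul_self_sqrt hL]

/-- Let `P` be a pmf on a finite alphabet `A` with `n·P i = c i` a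
positive integer for every `i` (so `∑ i, c i = n`).  Then the multinomial coefficient
`n!/∏ i (c i)!` satisfies
`2^{n·H(P)} / √((8n)^{|A|−1}·∏ i P i) ≤ n!/∏ i (c i)! ≤ 2^{n·H(P)} / √((2πn)^{|A|−1}·∏ i P i)`. -/
theorem multinomial_coefficient_bounds {A : Type*} [Fintype A] (n : ℕ) (hn : 0 < n)
    (P : A → ℝ) (c : A → ℕ)
    (hc : ∀ i, 0 < c i) (hcsum : ∑ i, c i = n)
    (hP : ∀ i, P i = (c i : ℝ) / n) :
    (2 : ℝ) ^ ((n : ℝ) * entropy P) /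
        Real.sqrt ((8 * (n : ℝ)) ^ (Fintype.card A - 1) * ∏ i, P i)
      ≤ (n.factorial : ℝ) / ∏ i, ((c i).factorial : ℝ)
    ∧ (n.factorial : ℝ) / ∏ i, ((c i).factorial : ℝ)
      ≤ (2 : ℝ) ^ ((n : ℝ) * entropy P) /
          Real.sqrt ((2 * Real.pi * (n : ℝ)) ^ (Fintype.card A - 1) * ∏ i, P i) := by
  have hne : (Finset.univ : Finset A).Nonempty := by
    by_contra h
    rw [Finset.not_nonempty_iff_eq_empty] at h
    rw [h, Finset.sum_empty] at hcsum
    omega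
  have hA : 0 < Fintype.card A := by rw [← Finset.card_univ]; exact hne.card_pos
  have hl := aux_lower c hc _ hne
  have hu := aux_upper c hc _ hne
  rw [hcsum, Finset.card_univ] at hl hu
  have h3 : 0 < ∏ i, Stirling.stirlingSeq (c i) := Finset.prod_pos fun i _ => aux_pos (hc i)
  have h4 : √(4 : ℝ) = 2 := by
    rw [show (4 : ℝ) = 2 * 2 by norm_num]; exact Real.sqrt_mul_self (by norm_num)
  rw [aux_main_s3 n hn P c hc hcsum hP hA, show (8 : ℝ) = 2 * 4 by norm_num,
    aux_sqrt 4 _ _ _ (by norm_num), aux_sqrt Real.pi _ _ _ Real.pi_pos.le, h4]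
  have hE : 0 ≤ (2 : ℝ) ^ ((n : ℝ) * entropy P) /
      √((2 * (n : ℝ)) ^ (Fintype.card A - 1) * ∏ i, P i) := by positivity
  have key : ∀ u v w : ℝ, u / (v * w) = 1 / v * (u / w) := by
    intro u v w; rw [div_mul_div_comm, one_mul]
  rw [key, key]
  have hpi : 0 < √Real.pi := Real.sqrt_pos.mpr Real.pi_pos
  constructor
  · refine mul_le_mul_of_nonneg_right ?_ hE
    rw [div_le_div_iff₀ (by positivity) h3]
    linarith
  · refine mul_le_mul_of_nonneg_right ?_ hE
    rw [div_le_div_iff₀ h3 (by positivity)]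
    linarith
end

section
/- Let A be a finite alphabet, let Q be a probability mass function on A, let n be a positive integer, and let P be any probability mass function on Aⁿ. Let P̄(a) = (1/n)·Σ_{i=1}^{n} P_i(a) be the average of the n single-letter marginals P_1, …, P_n of P. Then D(P ‖ Qⁿ) ≥ n · D(P̄ ‖ Q), where Qⁿ denotes the n-fold product pmf Qⁿ(a₁…aₙ) = Π_{i=1}^{n} Q(a_i). -/
/-- Informational divergence (base 2) of two pmfs on a finite set,
with the convention `0·log₂(0/q) = 0`. -/
noncomputable def kl {Ω : Type*} [Fintype Ω] (P Q : Ω → ℝ) : ℝ :=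
  ∑ a, P a * Real.logb 2 (P a / Q a)

/-- The n-fold product pmf `Qⁿ(a₁…aₙ) = ∏ᵢ Q(aᵢ)` on strings of length `n`. -/
noncomputable def prodPmf {A : Type*} [Fintype A] (Q : A → ℝ) (n : ℕ) :
    (Fin n → A) → ℝ :=
  fun x => ∏ i, Q (x i)

/-- The i-th single-letter marginal `P_i(a) = ∑_{x : x i = a} P(x)` of a pmf on `Aⁿ`. -/
noncomputable def marginal {A : Type*} [Fintype A] [DecidableEq A] (n : ℕ)
    (P : (Fin n → A) → ℝ) (i : Fin n) : A → ℝ :=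
  fun a => ∑ x ∈ Finset.univ.filter (fun x : Fin n → A => x i = a), P x

/-- The average single-letter marginal `P̄(a) = (1/n)·∑ᵢ P_i(a)`. -/
noncomputable def avgMarginal {A : Type*} [Fintype A] [DecidableEq A] (n : ℕ)
    (P : (Fin n → A) → ℝ) : A → ℝ :=
  fun a => (1 / (n : ℝ)) * ∑ i : Fin n, marginal n P i a

theorem aux_expect {A : Type*} [Fintype A] [DecidableEq A] (n : ℕ) (hn : 0 < n)
    (P : (Fin n → A) → ℝ) (g : A → ℝ) :
    (n : ℝ) * ∑ a, avgMarginal n P a * g a = ∑ x, P x * ∑ i, g (x i) := by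
  have hn' : (n : ℝ) ≠ 0 := by positivity
  have h1 : ∀ i : Fin n, ∑ a, marginal n P i a * g a = ∑ x, P x * g (x i) := by
    intro i
    rw [← Finset.sum_fiberwise (s := Finset.univ) (g := fun x : Fin n → A => x i)]
    refine Finset.sum_congr rfl fun a _ => ?_
    unfold marginal
    rw [Finset.sum_mul]
    refine Finset.sum_congr rfl fun x hx => ?_
    rw [(Finset.mem_filter.mp hx).2]
  calc (n : ℝ) * ∑ a, avgMarginal n P a * g a
      = ∑ a, ∑ i, marginal n P i a * g a := by
        rw [Finset.mul_sum]
        refine Finset.sum_congr rfl fun a _ => ?_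
        unfold avgMarginal
        rw [← Finset.sum_mul]
        field_simp
    _ = ∑ i, ∑ x, P x * g (x i) := by
        rw [Finset.sum_comm]
        exact Finset.sum_congr rfl fun i _ => h1 i
    _ = _ := by
        rw [Finset.sum_comm]
        exact Finset.sum_congr rfl fun x _ => by rw [Finset.mul_sum]

theorem aux_marg_nonneg {A : Type*} [Fintype A] [DecidableEq A] (n : ℕ)
    (P : (Fin n → A) → ℝ) (hP0 : ∀ x, 0 ≤ P x) (i : Fin n) (a : A) :
    0 ≤ marginal n P i a := Finset.sum_nonneg fun x _ => hP0 x

theorem aux_avg_nonneg {A : Type*} [Fintype A] [DecidableEq A] (n : ℕ)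
    (P : (Fin n → A) → ℝ) (hP0 : ∀ x, 0 ≤ P x) (a : A) :
    0 ≤ avgMarginal n P a :=
  mul_nonneg (by positivity) (Finset.sum_nonneg fun i _ => aux_marg_nonneg n P hP0 i a)

theorem aux_avg_pos {A : Type*} [Fintype A] [DecidableEq A] (n : ℕ) (hn : 0 < n)
    (P : (Fin n → A) → ℝ) (hP0 : ∀ x, 0 ≤ P x) (x : Fin n → A) (hx : 0 < P x) (i : Fin n) :
    0 < avgMarginal n P (x i) := by
  refine mul_pos (by positivity) ?_
  refine lt_of_lt_of_le ?_ (Finset.single_le_sum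
    (fun j _ => aux_marg_nonneg n P hP0 j (x i)) (Finset.mem_univ i))
  refine lt_of_lt_of_le hx ?_
  unfold marginal
  exact Finset.single_le_sum (f := P) (fun y _ => hP0 y) (by simp)

theorem aux_avg_sum {A : Type*} [Fintype A] [DecidableEq A] (n : ℕ) (hn : 0 < n)
    (P : (Fin n → A) → ℝ) (hP1 : ∑ x, P x = 1) :
    ∑ a, avgMarginal n P a = 1 := by
  have hn' : (n : ℝ) ≠ 0 := by positivity
  have h := aux_expect n hn P (fun _ => 1)
  simp only [mul_one, Finset.sum_const, Finset.card_univ, Fintype.card_fin, nsmul_eq_mul] at h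
  rw [← Finset.sum_mul, hP1, one_mul] at h
  exact mul_left_cancel₀ hn' (by rw [h, mul_one])

/-- For any pmf `P` on `Aⁿ` and any (everywhere positive) pmf `Q` on `A`,
`D(P ‖ Qⁿ) ≥ n · D(P̄ ‖ Q)`, where `P̄` is the average of the single-letter marginals. -/
theorem divergence_ge_n_mul_divergence_avg_marginal
    {A : Type*} [Fintype A] [DecidableEq A] (n : ℕ) (hn : 0 < n)
    (Q : A → ℝ) (hQpos : ∀ a, 0 < Q a) (hQ1 : ∑ a, Q a = 1)
    (P : (Fin n → A) → ℝ) (hP0 : ∀ x, 0 ≤ P x) (hP1 : ∑ x, P x = 1) :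
    kl P (prodPmf Q n) ≥ (n : ℝ) * kl (avgMarginal n P) Q := by
  set R := avgMarginal n P with hR
  have hlog2 : 0 < Real.log 2 := Real.log_pos (by norm_num)
  have hprod : ∑ x : Fin n → A, ∏ i, R (x i) = 1 := by
    have h := Finset.prod_univ_sum (fun _ : Fin n => (Finset.univ : Finset A)) (fun _ a => R a)
    rw [Fintype.piFinset_univ] at h
    rw [← h, aux_avg_sum n hn P hP1]
    simp
  have key : ∀ x, (P x - ∏ i, R (x i)) / Real.log 2 ≤
      P x * Real.logb 2 (P x / prodPmf Q n x) - P x * ∑ i, Real.logb 2 (R (x i) / Q (x i)) := by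
    intro x
    have hRp : 0 ≤ ∏ i, R (x i) := Finset.prod_nonneg fun i _ => aux_avg_nonneg n P hP0 _
    rcases (hP0 x).eq_or_lt with h0 | hx
    · rw [← h0]
      simp only [zero_mul, sub_zero, zero_sub]
      exact div_nonpos_of_nonpos_of_nonneg (by linarith) hlog2.le
    · have hRx : ∀ i, 0 < R (x i) := aux_avg_pos n hn P hP0 x hx
      have hRp' : 0 < ∏ i, R (x i) := Finset.prod_pos fun i _ => hRx i
      have hQp : 0 < ∏ i, Q (x i) := Finset.prod_pos fun i _ => hQpos _
      have e : ∑ i, Real.logb 2 (R (x i) / Q (x i))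
          = (Real.log (∏ i, R (x i)) - Real.log (∏ i, Q (x i))) / Real.log 2 := by
        rw [Real.log_prod (fun i _ => (hRx i).ne'), Real.log_prod (fun i _ => (hQpos _).ne'),
          ← Finset.sum_sub_distrib, Finset.sum_div]
        refine Finset.sum_congr rfl fun i _ => ?_
        rw [Real.logb, Real.log_div (hRx i).ne' (hQpos _).ne']
      rw [e, Real.logb, prodPmf, Real.log_div hx.ne' hQp.ne', ← mul_sub, ← sub_div, ← mul_div_assoc]
      refine div_le_div_of_nonneg_right ?_ hlog2.le
      have h := Real.log_le_sub_one_of_pos (div_pos hRp' hx)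
      rw [Real.log_div hRp'.ne' hx.ne'] at h
      have h2 := mul_le_mul_of_nonneg_left h hx.le
      have h3 : P x * ((∏ i, R (x i)) / P x - 1) = ∏ i, R (x i) - P x := by
        field_simp
      rw [h3] at h2
      linarith
  have hs := Finset.sum_le_sum fun x (_ : x ∈ Finset.univ) => key x
  rw [← Finset.sum_div, Finset.sum_sub_distrib, hP1, hprod, Finset.sum_sub_distrib,
    ← aux_expect n hn P (fun a => Real.logb 2 (R a / Q a))] at hs
  simp only [sub_self, zero_div] at hs
  unfold kl
  linarith
end

section
/- Let Ω be a finite set and Q a pmf on Ω with Q(a) > 0 for all a ∈ Ω. For a nonempty subset S ⊆ Ω define F(S) = −log₂|S| + (1/|S|)·Σ_{a∈S} ( −log₂ Q(a) ), which equals the I-divergence D(U_{|S|} ‖ Q) of the uniform distribution on S from Q. Then there exists a minimizer S* of F over all nonempty subsets of Ω that is a threshold set: for some t > 0, S* = { a ∈ Ω : Q(a) ≥ t }. -/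
/-- The uniform-codebook I-divergence
`F(S) = D(U_{|S|} ‖ Q) = −log₂|S| + (1/|S|)·∑_{a∈S}(−log₂ Q a)` of the uniform
distribution on a nonempty codebook `S` from a pmf `Q`. -/
noncomputable def uniformCodebookDiv {Ω : Type*} [Fintype Ω] (Q : Ω → ℝ)
    (S : Finset Ω) : ℝ :=
  -Real.logb 2 (S.card : ℝ) + (1 / (S.card : ℝ)) * ∑ a ∈ S, (-Real.logb 2 (Q a))

theorem ucd_eq {Ω : Type*} [Fintype Ω] (Q : Ω → ℝ) (S : Finset Ω) :
    uniformCodebookDiv Q S * Real.log 2 =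
      -Real.log (S.card : ℝ) + (∑ a ∈ S, (-Real.log (Q a))) / (S.card : ℝ) := by
  have h2 : Real.log 2 ≠ 0 := (Real.log_pos (by norm_num)).ne'
  have h : ∑ a ∈ S, (-Real.logb 2 (Q a)) = (∑ a ∈ S, (-Real.log (Q a))) / Real.log 2 := by
    rw [Finset.sum_div]
    exact Finset.sum_congr rfl fun a _ => by rw [Real.logb]; ring
  unfold uniformCodebookDiv
  rw [h, Real.logb]
  field_simp

theorem ucd_key {Ω : Type*} [Fintype Ω] (Q : Ω → ℝ) (hQpos : ∀ a, 0 < Q a)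
    (S : Finset Ω)
    (hmin : ∀ S' : Finset Ω, S'.Nonempty → uniformCodebookDiv Q S ≤ uniformCodebookDiv Q S')
    (a b : Ω) (ha : a ∈ S) (hab : Q a ≤ Q b) : b ∈ S := by
  classical
  by_contra hb
  have h2 : 0 < Real.log 2 := Real.log_pos (by norm_num)
  have hm : ∀ S' : Finset Ω, S'.Nonempty →
      -Real.log (S.card : ℝ) + (∑ a ∈ S, (-Real.log (Q a))) / (S.card : ℝ) ≤
      -Real.log (S'.card : ℝ) + (∑ a ∈ S', (-Real.log (Q a))) / (S'.card : ℝ) := by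
    intro S' h
    rw [← ucd_eq, ← ucd_eq]
    exact mul_le_mul_of_nonneg_right (hmin S' h) h2.le
  have hxy : -Real.log (Q b) ≤ -Real.log (Q a) :=
    neg_le_neg (Real.log_le_log (hQpos a) hab)
  have h1 := hm (insert b S) (Finset.insert_nonempty _ _)
  rw [Finset.card_insert_of_notMem hb, Finset.sum_insert hb] at h1
  have h3 := hm (S.erase a)
  have hs := Finset.add_sum_erase S (fun a => -Real.log (Q a)) ha
  have hc := Finset.card_erase_add_one ha
  have hU0 : (S.erase a).card = 0 → (∑ a ∈ S.erase a, (-Real.log (Q a))) = 0 := by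
    intro h
    rw [Finset.card_eq_zero.mp h, Finset.sum_empty]
  generalize (∑ a ∈ S, (-Real.log (Q a))) = T at *
  generalize (∑ a ∈ S.erase a, (-Real.log (Q a))) = U at *
  generalize -Real.log (Q a) = x at *
  generalize -Real.log (Q b) = y at *
  have hcard : (S.erase a).Nonempty ↔ 0 < (S.erase a).card := Finset.card_pos.symm
  rw [hcard] at h3
  generalize (S.erase a).card = m at *
  rw [← hc] at h1 h3
  push_cast at h1 h3
  have hm0 : (0 : ℝ) ≤ m := Nat.cast_nonneg m
  -- lower bound
  have hl : 1 < ((m : ℝ) + 1 + 1) * (Real.log (m + 1 + 1) - Real.log (m + 1)) := by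
    have := Real.log_lt_sub_one_of_pos (x := ((m : ℝ) + 1) / (m + 1 + 1)) (by positivity)
      (by rw [Ne, div_eq_one_iff_eq (by positivity)]; linarith)
    rw [Real.log_div (by positivity) (by positivity)] at this
    have h' : ((m : ℝ) + 1) / (m + 1 + 1) - 1 = - (1 / (m + 1 + 1)) := by field_simp; ring
    rw [h'] at this
    have h4 : 1 / ((m : ℝ) + 1 + 1) < Real.log (m + 1 + 1) - Real.log (m + 1) := by linarith
    rwa [div_lt_iff₀' (by positivity)] at h4
  have e1 : 1 < y - T / (m + 1) := by
    have h5 : Real.log ((m : ℝ) + 1 + 1) - Real.log (m + 1) ≤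
      (y + T) / (m + 1 + 1) - T / (m + 1) := by linarith
    have h6 := mul_le_mul_of_nonneg_left h5 (by positivity : (0 : ℝ) ≤ (m : ℝ) + 1 + 1)
    have h7 : ((m : ℝ) + 1 + 1) * ((y + T) / (m + 1 + 1) - T / (m + 1)) = y - T / (m + 1) := by
      field_simp; ring
    linarith
  rcases Nat.eq_zero_or_pos m with h0 | h0
  · have := hU0 h0
    subst h0
    norm_num at e1
    linarith
  · have h3 := h3 h0
    have hmp : (0 : ℝ) < m := Nat.cast_pos.mpr h0
    have hu : (m : ℝ) * (Real.log (m + 1) - Real.log m) ≤ 1 := by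
      have := Real.log_le_sub_one_of_pos (x := ((m : ℝ) + 1) / m) (by positivity)
      rw [Real.log_div (by positivity) (by positivity)] at this
      have h' : ((m : ℝ) + 1) / m - 1 = 1 / m := by field_simp; ring
      rw [h', le_div_iff₀' hmp] at this
      exact this
    have h5 : T / (m + 1) - U / m ≤ Real.log ((m : ℝ) + 1) - Real.log m := by linarith
    have h6 := mul_le_mul_of_nonneg_left h5 hmp.le
    have h7 : (m : ℝ) * (T / (m + 1) - U / m) = x - T / (m + 1) := by
      rw [← hs]; field_simp; ring
    linarith

/-- For a pmf `Q` with full support on a finite set `Ω`, there is a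
minimizer `S*` of `F(S) = D(U_{|S|}‖Q)` over nonempty subsets of `Ω` that is a
threshold set: `S* = {a : Q a ≥ t}` for some `t > 0`. -/
theorem optimal_dm_code_is_threshold_set {Ω : Type*} [Fintype Ω] [Nonempty Ω]
    (Q : Ω → ℝ) (hQpos : ∀ a, 0 < Q a) (hQ1 : ∑ a, Q a = 1) :
    ∃ (S : Finset Ω) (t : ℝ), S.Nonempty ∧ 0 < t ∧
      (∀ a, a ∈ S ↔ t ≤ Q a) ∧
      ∀ S' : Finset Ω, S'.Nonempty → uniformCodebookDiv Q S ≤ uniformCodebookDiv Q S' := by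
  classical
  obtain ⟨S, hS, hmin⟩ := Finset.exists_min_image
    ((Finset.univ : Finset (Finset Ω)).filter Finset.Nonempty) (uniformCodebookDiv Q)
    ⟨Finset.univ, by simp⟩
  have hSn : S.Nonempty := (Finset.mem_filter.mp hS).2
  have hmin' : ∀ S' : Finset Ω, S'.Nonempty →
      uniformCodebookDiv Q S ≤ uniformCodebookDiv Q S' := fun S' h => hmin S' (by simpa using h)
  obtain ⟨a, ha, hamin⟩ := Finset.exists_min_image S Q hSn
  exact ⟨S, Q a, hSn, hQpos a, fun b => ⟨fun h => hamin b h,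
    fun h => ucd_key Q hQpos S hmin' a b ha h⟩, hmin'⟩
end

section
/- Let A be a finite alphabet, Q a pmf on A with Q(a) > 0 for all a, and P = [p₁,…,p_{|A|}] a pmf with n·p_i a positive integer for every i. Let S ⊆ Aⁿ be the set of all strings with empirical pmf P, so K := |S| = n!/Π_i (n·p_i)!, and let c = (Π_{i=1}^{|A|} p_i)^{1/(|A|−1)}. Then the constant-composition distribution matcher satisfies ((|A|−1)/2)·log₂(2πn·c) + n·D(P‖Q) ≤ D(U_K ‖ Qⁿ) ≤ ((|A|−1)/2)·log₂(8n·c) + n·D(P‖Q), where D(U_K ‖ Qⁿ) = Σ_{aⁿ∈S}(1/K)·log₂((1/K)/Qⁿ(aⁿ)). -/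
namespace CCDMAux

open Finset

noncomputable def L (k : ℕ) : ℝ := Real.log (Stirling.stirlingSeq k)

lemma L_diff_anti (m k : ℕ) (h : m ≤ k) :
    L (k+1) - L (k+2) ≤ L (m+1) - L (m+2) := by
  refine hasSum_le ?_ (Stirling.log_stirlingSeq_sdiff_hasSum k)
    (Stirling.log_stirlingSeq_sdiff_hasSum m)
  intro j
  have : (m:ℝ) ≤ k := by exact_mod_cast h
  push_cast
  gcongr

lemma L_formula (k : ℕ) (hk : 0 < k) :
    Real.log (k.factorial : ℝ) = L k + 1/2 * Real.log 2 + 1/2 * Real.log k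
      + k * (Real.log k - 1) := by
  have hk' : (k:ℝ) ≠ 0 := by positivity
  unfold L
  rw [Stirling.log_stirlingSeq_formula, Real.log_mul two_ne_zero hk',
    Real.log_div hk' (Real.exp_ne_zero 1), Real.log_exp]
  ring

lemma L_upper_succ (a b : ℕ) : L (a+1) + L (b+1) ≤ L (a+1+(b+1)) + Real.log 2 := by
  have base : L 1 + L 1 ≤ L 2 + Real.log 2 := by
    have h1 := L_formula 1 one_pos
    have h2 := L_formula 2 two_pos
    norm_num [Nat.factorial] at h1 h2
    linarith
  have h1 : ∀ b, L 1 + L (b+1) ≤ L (b+2) + Real.log 2 := by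
    intro b
    induction b with
    | zero => simpa using base
    | succ b ih =>
      have := L_diff_anti b (b+1) (by omega)
      simp only [add_assoc] at *
      norm_num at *
      linarith
  induction a with
  | zero =>
    have := h1 b
    rwa [show 0+1+(b+1) = b+2 by ring, zero_add]
  | succ a ih =>
    have := L_diff_anti a (a+b+1) (by omega)
    rw [show a+1+(b+1) = a+b+1+1 by ring] at ih
    rw [show a+1+1+(b+1) = a+b+1+2 by ring]
    rw [show a+1+1 = a+2 by ring]
    linarith

lemma L_upper (a b : ℕ) (ha : 0 < a) (hb : 0 < b) : L a + L b ≤ L (a+b) + Real.log 2 := by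
  obtain ⟨a, rfl⟩ := Nat.exists_eq_succ_of_ne_zero ha.ne'
  obtain ⟨b, rfl⟩ := Nat.exists_eq_succ_of_ne_zero hb.ne'
  exact L_upper_succ a b

lemma L_lower (a b : ℕ) (ha : 0 < a) (hb : 0 < b) :
    L (a+b) + Real.log Real.pi / 2 ≤ L a + L b := by
  have h1 : Real.log Real.pi / 2 ≤ L b := by
    rw [← Real.log_sqrt Real.pi_pos.le]
    exact Real.log_le_log (by positivity) (Stirling.sqrt_pi_le_stirlingSeq hb.ne')
  obtain ⟨a, rfl⟩ := Nat.exists_eq_succ_of_ne_zero ha.ne'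
  have h2 := Stirling.log_stirlingSeq'_antitone (Nat.le_add_right a b)
  have h3 : L (a + b + 1) ≤ L (a+1) := h2
  rw [show a.succ + b = a + b + 1 by simp; ring]
  simp only [Nat.succ_eq_add_one]
  linarith

lemma sum_le {A : Type*} (g : ℕ → ℝ) (C : ℝ)
    (hg : ∀ a b, 0 < a → 0 < b → g a + g b ≤ g (a+b) + C) (c : A → ℕ) (hc : ∀ i, 0 < c i)
    (s : Finset A) (hs : s.Nonempty) :
    ∑ i ∈ s, g (c i) ≤ g (∑ i ∈ s, c i) + ((s.card : ℝ) - 1) * C := by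
  induction hs using Finset.Nonempty.cons_induction with
  | singleton a => simp
  | cons a s ha hs ih =>
    rw [sum_cons, sum_cons, card_cons]
    have := hg (c a) (∑ i ∈ s, c i) (hc a) (sum_pos (fun i _ => hc i) hs)
    push_cast
    linarith

lemma exists_perm {A : Type*} [Fintype A] [DecidableEq A] {n : ℕ} (x y : Fin n → A)
    (h : ∀ i, #{j | x j = i} = #{j | y j = i}) : ∃ g : Equiv.Perm (Fin n), x = y ∘ g := by
  have e : ∀ i, Nonempty ({j // x j = i} ≃ {j // y j = i}) := fun i => by
    rw [← Fintype.card_eq, Fintype.card_subtype, Fintype.card_subtype]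
    exact h i
  replace e := fun i => (e i).some
  refine ⟨(Equiv.sigmaFiberEquiv x).symm.trans
    ((Equiv.sigmaCongrRight e).trans (Equiv.sigmaFiberEquiv y)), ?_⟩
  ext j
  exact ((e (x j)) ⟨j, rfl⟩).2.symm

lemma card_S {A : Type*} [Fintype A] [DecidableEq A]
    (n : ℕ) (c : A → ℕ) (hcsum : ∑ i, c i = n)
    (S : Finset (Fin n → A))
    (hS : ∀ x : Fin n → A,
      x ∈ S ↔ ∀ i, (Finset.univ.filter (fun j => x j = i)).card = c i) :
    S.card * ∏ i, (c i).factorial = n.factorial := by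
  obtain ⟨x0, hx0⟩ : ∃ x0, x0 ∈ S := by
    have e : Nonempty (Fin n ≃ Σ i, Fin (c i)) := by
      rw [← Fintype.card_eq]; simp [hcsum]
    obtain ⟨e⟩ := e
    refine ⟨fun j => (e j).1, (hS _).2 fun i => ?_⟩
    rw [← Fintype.card_subtype, Fintype.card_congr ((e.subtypeEquiv (q := fun p => p.1 = i) (fun j => Iff.rfl)).trans (Equiv.sigmaSubtype i)), Fintype.card_fin]
  have hmap : ∀ g ∈ (univ : Finset (Equiv.Perm (Fin n))), x0 ∘ g ∈ S := by
    intro g _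
    rw [hS] at hx0 ⊢
    intro i
    rw [← hx0 i, ← Fintype.card_subtype, ← Fintype.card_subtype]
    exact Fintype.card_congr (g.subtypeEquiv fun j => Iff.rfl)
  have h := card_eq_sum_card_fiberwise (f := fun g : Equiv.Perm (Fin n) => x0 ∘ g) hmap
  rw [card_univ, Fintype.card_perm, Fintype.card_fin] at h
  rw [h, ← smul_eq_mul, ← sum_const]
  refine sum_congr rfl fun x hx => ?_
  obtain ⟨k, rfl⟩ := exists_perm x x0 fun i => by rw [(hS _).1 hx, (hS _).1 hx0]
  have h2 := DomMulAct.stabilizer_card x0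
  simp only [Fintype.card_subtype, (hS _).1 hx0] at h2
  rw [← h2]
  refine card_bij (fun g _ => g * k) ?_ ?_ ?_
  · intro g hg
    simp only [mem_filter, mem_univ, true_and] at hg ⊢
    rw [Equiv.Perm.coe_mul, ← Function.comp_assoc, hg]
  · intro a _ b _ hab
    exact mul_right_cancel hab
  · intro g hg
    simp only [mem_filter, mem_univ, true_and] at hg
    refine ⟨g * k⁻¹, ?_, by simp⟩
    simp only [mem_filter, mem_univ, true_and]
    rw [Equiv.Perm.coe_mul, ← Function.comp_assoc, hg, Function.comp_assoc, ← Equiv.Perm.coe_mul]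
    simp

lemma log_c0 {A : Type*} [Fintype A] [DecidableEq A]
    (n : ℕ) (hn : 0 < n) (P : A → ℝ) (c : A → ℕ) (hc : ∀ i, 0 < c i) (hcsum : ∑ i, c i = n)
    (hP : ∀ i, P i = (c i : ℝ) / n)
    (c₀ : ℝ) (hc₀ : c₀ = (∏ i, P i) ^ ((1 : ℝ) / ((Fintype.card A : ℝ) - 1)))
    (t : ℝ) (ht : 0 < t) :
    ((Fintype.card A : ℝ) - 1) / 2 * Real.log (t * n * c₀) =
      ((Fintype.card A : ℝ) - 1) / 2 * Real.log t - 1/2 * Real.log n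
        + 1/2 * ∑ i, Real.log (c i) := by
  have hn' : (0:ℝ) < n := by exact_mod_cast hn
  have hci : ∀ i, (0:ℝ) < c i := fun i => by exact_mod_cast hc i
  have hPpos : ∀ i, 0 < P i := fun i => by rw [hP]; exact div_pos (hci i) hn'
  have hprod : 0 < ∏ i, P i := prod_pos fun i _ => hPpos i
  have hc0 : 0 < c₀ := by rw [hc₀]; positivity
  have hlog : Real.log (∏ i, P i) = ∑ i, Real.log (c i) - Fintype.card A * Real.log n := by
    rw [Real.log_prod (fun i _ => (hPpos i).ne')]
    simp_rw [hP, fun i => Real.log_div (hci i).ne' hn'.ne']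
    simp
  have hkey : ((Fintype.card A : ℝ) - 1) * Real.log c₀ = Real.log (∏ i, P i) := by
    rw [hc₀, Real.log_rpow hprod]
    by_cases h1 : (Fintype.card A : ℝ) - 1 = 0
    · have : Fintype.card A = 1 := by
        have : (Fintype.card A : ℝ) = 1 := by linarith
        exact_mod_cast this
      obtain ⟨a, ha⟩ := Fintype.card_eq_one_iff.1 this
      have hu : (univ : Finset A) = {a} := by ext i; simp [ha i]
      rw [hu, sum_singleton] at hcsum
      rw [h1, hu, prod_singleton, hP, hcsum, div_self hn'.ne']
      simp
    · field_simp
  rw [Real.log_mul (by positivity) hc0.ne', Real.log_mul ht.ne' hn'.ne']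
  linear_combination (1/2) * hkey + (1/2) * hlog

end CCDMAux

/-- Let `Q` be a full-support pmf on `A`, `P` a pmf with
`n·P i = c i` a positive integer for every `i`, `S` the set of strings of
empirical pmf `P`, `K = |S| = n!/∏ i (c i)!`, and `c₀ = (∏ i P i)^{1/(|A|−1)}`.
The constant-composition distribution matcher satisfies
`((|A|−1)/2)·log₂(2πn·c₀) + n·D(P‖Q) ≤ D(U_K‖Qⁿ) ≤ ((|A|−1)/2)·log₂(8n·c₀) + n·D(P‖Q)`,
where `D(U_K‖Qⁿ) = ∑_{aⁿ∈S} (1/K)·log₂((1/K)/Qⁿ(aⁿ))`. -/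
theorem ccdm_divergence_bounds {A : Type*} [Fintype A] [DecidableEq A]
    (n : ℕ) (hn : 0 < n)
    (Q : A → ℝ) (hQpos : ∀ a, 0 < Q a) (hQ1 : ∑ a, Q a = 1)
    (P : A → ℝ) (c : A → ℕ) (hc : ∀ i, 0 < c i) (hcsum : ∑ i, c i = n)
    (hP : ∀ i, P i = (c i : ℝ) / n)
    (S : Finset (Fin n → A))
    (hS : ∀ x : Fin n → A,
      x ∈ S ↔ ∀ i, (Finset.univ.filter (fun j => x j = i)).card = c i)
    (c₀ : ℝ) (hc₀ : c₀ = (∏ i, P i) ^ ((1 : ℝ) / ((Fintype.card A : ℝ) - 1))) :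
    (S.card : ℝ) = (n.factorial : ℝ) / ∏ i, ((c i).factorial : ℝ)
    ∧ ((Fintype.card A : ℝ) - 1) / 2 * Real.logb 2 (2 * Real.pi * n * c₀)
          + (n : ℝ) * kl P Q
        ≤ ∑ x ∈ S, (1 / (S.card : ℝ)) * Real.logb 2 ((1 / (S.card : ℝ)) / prodPmf Q n x)
    ∧ ∑ x ∈ S, (1 / (S.card : ℝ)) * Real.logb 2 ((1 / (S.card : ℝ)) / prodPmf Q n x)
        ≤ ((Fintype.card A : ℝ) - 1) / 2 * Real.logb 2 (8 * n * c₀)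
          + (n : ℝ) * kl P Q := by
  have hn' : (0:ℝ) < n := by exact_mod_cast hn
  have hci : ∀ i, (0:ℝ) < c i := fun i => by exact_mod_cast hc i
  have hK := CCDMAux.card_S n c hcsum S hS
  have hfpos : 0 < ∏ i, ((c i).factorial : ℝ) :=
    Finset.prod_pos fun i _ => by exact_mod_cast (c i).factorial_pos
  have hKR : (S.card : ℝ) * ∏ i, ((c i).factorial : ℝ) = (n.factorial : ℝ) := by
    exact_mod_cast hK
  have hKpos : (0:ℝ) < S.card := by
    have : (0:ℝ) < n.factorial := by exact_mod_cast n.factorial_pos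
    rw [← hKR] at this
    exact pos_of_mul_pos_left this hfpos.le
  have hl2 : 0 < Real.log 2 := Real.log_pos one_lt_two
  have hA : (Finset.univ : Finset A).Nonempty := by
    rw [Finset.nonempty_iff_ne_empty]
    intro h
    rw [h, Finset.sum_empty] at hcsum
    omega
  have hcsumR : ∑ i, (c i : ℝ) = n := by exact_mod_cast hcsum
  -- the divergence sum
  have hD : ∑ x ∈ S, (1 / (S.card : ℝ)) * Real.logb 2 ((1 / (S.card : ℝ)) / prodPmf Q n x)
      = (- Real.log S.card - ∑ i, (c i : ℝ) * Real.log (Q i)) / Real.log 2 := by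
    have : ∀ x ∈ S, (1 / (S.card : ℝ)) * Real.logb 2 ((1 / (S.card : ℝ)) / prodPmf Q n x)
        = (1 / (S.card : ℝ)) *
          ((- Real.log S.card - ∑ i, (c i : ℝ) * Real.log (Q i)) / Real.log 2) := by
      intro x hx
      have hp : 0 < prodPmf Q n x := Finset.prod_pos fun i _ => hQpos _
      have hlp : Real.log (prodPmf Q n x) = ∑ i, (c i : ℝ) * Real.log (Q i) := by
        unfold prodPmf
        rw [Real.log_prod (fun i _ => (hQpos _).ne'),
          ← Finset.sum_fiberwise (s := Finset.univ) (g := x)]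
        refine Finset.sum_congr rfl fun i _ => ?_
        rw [Finset.sum_congr rfl (g := fun _ => Real.log (Q i)), Finset.sum_const,
          (hS x).1 hx, nsmul_eq_mul]
        intro j hj
        rw [(Finset.mem_filter.1 hj).2]
      rw [Real.logb, Real.log_div (by positivity) hp.ne', hlp, one_div, Real.log_inv]
    rw [Finset.sum_congr rfl this, Finset.sum_const, nsmul_eq_mul]
    field_simp
  have hkl : (n:ℝ) * kl P Q = (∑ i, (c i : ℝ) * Real.log (c i) - n * Real.log n
      - ∑ i, (c i : ℝ) * Real.log (Q i)) / Real.log 2 := by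
    unfold kl
    have hnl : (n:ℝ) * Real.log n = ∑ i, (c i : ℝ) * Real.log n := by
      rw [← Finset.sum_mul, hcsumR]
    rw [hnl, ← Finset.sum_sub_distrib, ← Finset.sum_sub_distrib, Finset.mul_sum, Finset.sum_div]
    refine Finset.sum_congr rfl fun i _ => ?_
    rw [hP, Real.logb, Real.log_div (div_pos (hci i) hn').ne' (hQpos i).ne',
      Real.log_div (hci i).ne' hn'.ne']
    field_simp
  have hlogK : Real.log S.card = Real.log n.factorial - ∑ i, Real.log ((c i).factorial : ℝ) := by
    rw [← hKR, Real.log_mul hKpos.ne' hfpos.ne',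
      Real.log_prod (fun i _ => by exact_mod_cast (c i).factorial_ne_zero)]
    ring
  have hsumf : ∑ i, Real.log ((c i).factorial : ℝ) = ∑ i, CCDMAux.L (c i)
      + (Fintype.card A : ℝ) * (1/2 * Real.log 2) + 1/2 * ∑ i, Real.log (c i)
      + (∑ i, (c i : ℝ) * Real.log (c i) - n) := by
    rw [Finset.sum_congr rfl fun i _ => CCDMAux.L_formula (c i) (hc i)]
    simp only [mul_sub, mul_one, Finset.sum_add_distrib, Finset.sum_sub_distrib, Finset.mul_sum,
      hcsumR, Finset.sum_const, nsmul_eq_mul, Finset.card_univ]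
  have hnf := CCDMAux.L_formula n hn
  have hup := CCDMAux.sum_le CCDMAux.L (Real.log 2) CCDMAux.L_upper c hc Finset.univ hA
  have hlo := CCDMAux.sum_le (fun k => - CCDMAux.L k) (-(Real.log Real.pi / 2))
    (fun a b ha hb => by have := CCDMAux.L_lower a b ha hb; linarith) c hc Finset.univ hA
  simp only [hcsum, Finset.card_univ, Finset.sum_neg_distrib] at hup hlo
  have hc2 := CCDMAux.log_c0 n hn P c hc hcsum hP c₀ hc₀ (2 * Real.pi) (by positivity)
  have hc8 := CCDMAux.log_c0 n hn P c hc hcsum hP c₀ hc₀ 8 (by norm_num)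
  rw [Real.log_mul two_ne_zero Real.pi_ne_zero] at hc2
  have h8 : Real.log 8 = 3 * Real.log 2 := by
    rw [show (8:ℝ) = 2 ^ 3 by norm_num, Real.log_pow]; norm_num
  rw [h8] at hc8
  refine ⟨by rw [eq_div_iff hfpos.ne']; exact hKR, ?_, ?_⟩
  · rw [hD, hkl, Real.logb, ← mul_div_assoc, ← add_div, hc2, hlogK, hsumf, hnf]
    gcongr
    linarith
  · rw [hD, hkl, Real.logb, ← mul_div_assoc, ← add_div, hc8, hlogK, hsumf, hnf]
    gcongr
    linarith
end

section
/- For every positive integer n and every integer k with 0 ≤ k < n/2, define p̄ = ( Σ_{i=0}^{k} C(n,i)·i ) / ( n · Σ_{i=0}^{k} C(n,i) ). Then 0 ≤ k/n − p̄ ≤ (1 − k/n)/( n·(1 − 2k/n) ) + 1/( 2n²·(1 − 2k/n)² ). -/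
lemma aux_S (n : ℕ) (k : ℕ) (hk : k < n) :
    (∑ i ∈ Finset.range (k + 1), (n.choose i : ℝ)) * ((n : ℝ) - k)
      ≤ (k + 1) * ∑ i ∈ Finset.range (k + 2), (n.choose i : ℝ) := by
  have hc : ∀ j : ℕ, j ≤ n →
      (n.choose (j + 1) : ℝ) * ((j : ℝ) + 1) = n.choose j * ((n : ℝ) - j) := by
    intro j hj
    have h := Nat.choose_succ_right_eq n j
    have h2 : ((n.choose (j + 1) * (j + 1) : ℕ) : ℝ) = ((n.choose j * (n - j) : ℕ) : ℝ) := by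
      rw [h]
    push_cast [Nat.cast_sub hj] at h2
    exact h2
  induction k with
  | zero =>
    simp [Finset.sum_range_succ]
  | succ k ih =>
    have h1 := ih (by omega)
    have h2 := hc (k + 1) (by omega)
    have h3 : (0 : ℝ) ≤ ∑ i ∈ Finset.range (k + 1), (n.choose i : ℝ) :=
      Finset.sum_nonneg (fun i _ => by positivity)
    have e2 := Finset.sum_range_succ (fun i => (n.choose i : ℝ)) (k + 1)
    have e3 := Finset.sum_range_succ (fun i => (n.choose i : ℝ)) (k + 2)
    have h4 : (0 : ℝ) ≤ n.choose (k + 1) := by positivity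
    simp only [show k + 1 + 1 = k + 2 from rfl, show k + 1 + 2 = k + 2 + 1 from rfl] at *
    rw [e3]
    push_cast at *
    rw [e2] at h1 ⊢
    nlinarith

lemma aux_nonneg (n k : ℕ) :
    (∑ i ∈ Finset.range (k + 1), (n.choose i : ℝ) * i)
      ≤ k * ∑ i ∈ Finset.range (k + 1), (n.choose i : ℝ) := by
  rw [Finset.mul_sum]
  refine Finset.sum_le_sum (fun i hi => ?_)
  have : (i : ℝ) ≤ k := by
    have := Finset.mem_range.mp hi
    exact_mod_cast (by omega : i ≤ k)
  rw [mul_comm]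
  exact mul_le_mul_of_nonneg_right this (by positivity)

lemma aux_T (n : ℕ) (k : ℕ) (hk : 2 * k < n) :
    (k * (∑ i ∈ Finset.range (k + 1), (n.choose i : ℝ))
      - ∑ i ∈ Finset.range (k + 1), (n.choose i : ℝ) * i) * ((n : ℝ) - 2 * k + 1)
      ≤ k * ∑ i ∈ Finset.range (k + 1), (n.choose i : ℝ) := by
  induction k with
  | zero => simp
  | succ k ih =>
    have h1 := ih (by omega)
    have h2 := aux_S n k (by omega)
    have h0 := aux_nonneg n k
    have h3 : (0 : ℝ) ≤ ∑ i ∈ Finset.range (k + 1), (n.choose i : ℝ) :=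
      Finset.sum_nonneg (fun i _ => by positivity)
    have e2 := Finset.sum_range_succ (fun i => (n.choose i : ℝ)) (k + 1)
    have e3 := Finset.sum_range_succ (fun i => (n.choose i : ℝ) * (i : ℝ)) (k + 1)
    rw [e3]
    simp only [show k + 1 + 1 = k + 2 from rfl] at *
    rw [e2] at h2 ⊢
    push_cast at *
    nlinarith


/-- For every positive integer `n` and integer `0 ≤ k < n/2`,
the average fraction of ones
`p̄ = (∑_{i=0}^{k} C(n,i)·i)/(n·∑_{i=0}^{k} C(n,i))` satisfies
`0 ≤ k/n − p̄ ≤ (1 − k/n)/(n(1 − 2k/n)) + 1/(2n²(1 − 2k/n)²)`. -/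
theorem average_weight_fraction_bounds (n k : ℕ) (hn : 0 < n) (hk : 2 * k < n)
    (pbar : ℝ)
    (hpbar : pbar = (∑ i ∈ Finset.range (k + 1), (n.choose i : ℝ) * i)
        / ((n : ℝ) * ∑ i ∈ Finset.range (k + 1), (n.choose i : ℝ))) :
    0 ≤ (k : ℝ) / n - pbar
    ∧ (k : ℝ) / n - pbar
        ≤ (1 - (k : ℝ) / n) / ((n : ℝ) * (1 - 2 * (k : ℝ) / n))
          + 1 / (2 * (n : ℝ) ^ 2 * (1 - 2 * (k : ℝ) / n) ^ 2) := by
  have hn' : (0 : ℝ) < n := by exact_mod_cast hn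
  have hd : (0 : ℝ) < (n : ℝ) - 2 * k := by
    have : ((2 * k : ℕ) : ℝ) < n := by exact_mod_cast hk
    push_cast at this
    linarith
  have hk0 : (0 : ℝ) ≤ k := by positivity
  have h0 := aux_nonneg n k
  have h1 := aux_T n k hk
  have hS : (0 : ℝ) < ∑ i ∈ Finset.range (k + 1), (n.choose i : ℝ) := by
    refine Finset.sum_pos (fun i hi => ?_) ⟨0, by simp⟩
    have := Finset.mem_range.mp hi
    exact_mod_cast Nat.choose_pos (by omega)
  generalize (∑ i ∈ Finset.range (k + 1), (n.choose i : ℝ)) = S at *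
  generalize (∑ i ∈ Finset.range (k + 1), (n.choose i : ℝ) * i) = A at *
  have e : (k : ℝ) / n - pbar = (k * S - A) / (n * S) := by
    rw [hpbar]; field_simp
  rw [e]
  refine ⟨div_nonneg (by linarith) (by positivity), ?_⟩
  have e1 : (1 - (k : ℝ) / n) / ((n : ℝ) * (1 - 2 * (k : ℝ) / n))
      = ((n : ℝ) - k) / (n * (n - 2 * k)) := by
    have : (1 - 2 * (k : ℝ) / n) = (n - 2 * k) / n := by field_simp
    rw [this]
    field_simp
  have e2 : (0 : ℝ) ≤ 1 / (2 * (n : ℝ) ^ 2 * (1 - 2 * (k : ℝ) / n) ^ 2) := by positivity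
  rw [e1]
  refine le_trans ?_ (le_add_of_nonneg_right e2)
  rw [div_le_div_iff₀ (by positivity) (by positivity)]
  have h2 : (k * S - A) * ((n : ℝ) - 2 * k) ≤ (n - k) * S := by nlinarith
  nlinarith
end

section
/- Let K ≥ 1, let δ ≥ 0, and let q₁,…,q_K be reals with total q_S := Σ_{w=1}^{K} q_w ≤ 1 and q_w ≥ q_S/K − δ > 0 for every w. If x := (1 − q_S) + K·δ ≤ 1/2, then Σ_{w=1}^{K} (1/K)·log₂( (1/K)/q_w ) ≤ log₂( 1/(1 − x) ) ≤ 2x. In particular, if the sets produced by the MLF or LLF algorithm satisfy q_{S_w} ≥ q_S/K − p_max for all w, where p_max is the largest string probability in the code, then D(U_K ‖ [q_{S_1},…,q_{S_K}]) ≤ 2[ (1 − q_S) + K·p_max ] whenever (1 − q_S) + K·p_max ≤ 1/2. -/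
/-- Let `K ≥ 1`, `δ ≥ 0`, and `q₁,…,q_K` with total
`q_S = ∑_w q_w ≤ 1` and `q_w ≥ q_S/K − δ > 0` for every `w`.  If
`x = (1 − q_S) + K·δ ≤ 1/2`, then
`∑_w (1/K)·log₂((1/K)/q_w) ≤ log₂(1/(1−x)) ≤ 2x`.  In particular the sets
produced by MLF or LLF (which satisfy `q_{S_w} ≥ q_S/K − p_max`) have
`D(U_K‖[q_{S_1},…,q_{S_K}]) ≤ 2[(1 − q_S) + K·p_max]`. -/
theorem mlf_llf_divergence_upper_bound (K : ℕ) (hK : 1 ≤ K)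
    (δ : ℝ) (hδ : 0 ≤ δ) (q : Fin K → ℝ) (qS x : ℝ)
    (hqS : qS = ∑ w, q w) (hqS1 : qS ≤ 1)
    (hlow : ∀ w, qS / K - δ ≤ q w) (hpos : 0 < qS / K - δ)
    (hx : x = (1 - qS) + K * δ) (hx2 : x ≤ 1 / 2) :
    ∑ w, (1 / (K : ℝ)) * Real.logb 2 ((1 / (K : ℝ)) / q w) ≤ Real.logb 2 (1 / (1 - x))
    ∧ Real.logb 2 (1 / (1 - x)) ≤ 2 * x := by
  have hK0 : (0 : ℝ) < K := by exact_mod_cast hK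
  have hx0 : 0 ≤ x := by
    have : 0 ≤ (K : ℝ) * δ := mul_nonneg hK0.le hδ
    linarith
  have h1x : 0 < 1 - x := by linarith
  constructor
  · have hterm : ∀ w ∈ Finset.univ, (1 / (K : ℝ)) * Real.logb 2 ((1 / (K : ℝ)) / q w)
        ≤ (1 / (K : ℝ)) * Real.logb 2 (1 / (1 - x)) := by
      intro w _
      have hq : 0 < q w := lt_of_lt_of_le hpos (hlow w)
      have hle : 1 - x ≤ K * q w := by
        have h := mul_le_mul_of_nonneg_left (hlow w) hK0.le
        have e : (K : ℝ) * (qS / K - δ) = qS - K * δ := by field_simp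
        linarith
      apply mul_le_mul_of_nonneg_left _ (by positivity)
      apply Real.logb_le_logb_of_le (by norm_num) (by positivity)
      rw [div_div]
      exact one_div_le_one_div_of_le h1x hle
    refine (Finset.sum_le_sum hterm).trans (le_of_eq ?_)
    rw [Finset.sum_const, Finset.card_univ, Fintype.card_fin, nsmul_eq_mul]
    field_simp
  · have hc := strictConcaveOn_log_Ioi.concaveOn.2 (show (1 : ℝ) ∈ Set.Ioi 0 by simp)
      (show (1 / 2 : ℝ) ∈ Set.Ioi 0 by simp) (show 0 ≤ 1 - 2 * x by linarith)
      (show 0 ≤ 2 * x by linarith) (by ring)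
    simp only [smul_eq_mul, Real.log_one, mul_zero, zero_add] at hc
    have e : (1 - 2 * x) * 1 + 2 * x * (1 / 2) = 1 - x := by ring
    rw [e, one_div, Real.log_inv] at hc
    rw [Real.logb, div_le_iff₀ (Real.log_pos (by norm_num)), one_div, Real.log_inv]
    linarith
end
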